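/- Let n = 15 and let σ be a generator of Gal(F_{q^15}/F_q). For a, b ∈ F_{q^15}, the F_q-dimension of the kernel of a·x + b·x^σ − x^{σ^4} equals 4 if and only if the following hold: N_{q^15/q}(a) = 1; q is even; and b = (σ^4(a)·σ^8(a)·σ^{12}(a))^{−1}. -/

import Mathlib

/-!
A root `v ≠ 0` of a `σ`-linearized polynomial becomes the root `1` after substituting `v * x`, and
then `X - 1` divides the ordinary polynomial with the same coefficients. Splitting off roots in this
way bounds the dimension of the kernel by the `σ`-degree, and when the bound is attained it
determines the norm of the constant coefficient: for the trinomial this gives `N(-a) = 1`. As `σ⁴`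
is again a generator, Hilbert's Theorem 90 yields `v` with `σ⁴ v = -a v`, and substituting `v * x`
reduces to the case `a = -1`.

There the orbit of a root satisfies `σⁱ⁺⁴ x = σⁱ(b) σⁱ⁺¹ x - σⁱ x`. Running the recurrence up to
`σ¹⁵ x = x` gives a `σ`-polynomial of degree at most `3` that vanishes on the `4`-dimensional
kernel, so its coefficients are zero. The resulting equations make `σ³` fix `b` and give
`(b + 1) (b² + 1) = 0`, which forces characteristic `2` and `b = 1`. Conversely, `X⁴ + X + 1`
divides `X¹⁵ - 1` over `𝔽₂`, so its kernel at `σ` has the full dimension `4`.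
-/

open Polynomial
open Module (End finrank)

theorem finrank_ker_comp_le {K U V W : Type*} [Field K] [AddCommGroup U] [Module K U]
    [FiniteDimensional K U] [AddCommGroup V] [Module K V] [FiniteDimensional K V]
    [AddCommGroup W] [Module K W] (g : V →ₗ[K] W) (f : U →ₗ[K] V) :
    finrank K (LinearMap.ker (g ∘ₗ f)) ≤
      finrank K (LinearMap.ker g) + finrank K (LinearMap.ker f) := by
  let f' := f.domRestrict (LinearMap.ker (g ∘ₗ f))
  have hrange : LinearMap.range f' ≤ LinearMap.ker g := by
    rintro _ ⟨x, rfl⟩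
    exact x.2
  have hker : finrank K (LinearMap.ker f') = finrank K (LinearMap.ker f) :=
    (Submodule.comapSubtypeEquivOfLe (LinearMap.ker_le_ker_comp f g)).finrank_eq
  rw [← f'.finrank_range_add_finrank_ker, hker]
  gcongr
  exact Submodule.finrank_mono hrange

section SkewEval

variable {K L : Type*} [Field K] [Field L] [Algebra K L] (σ : L ≃ₐ[K] L)

/-- The `K`-linear map `x ↦ ∑ i, aᵢ * σ ^ i x` of a `σ`-linearized polynomial. Its coefficients are
recorded in the ordinary polynomial `∑ i, aᵢ X ^ i`, so that `natDegree` is the `σ`-degree; the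
product of `L[X]` corresponds to composition only if the right factor has coefficients in `K`. -/
noncomputable def skewEval : L[X] →ₗ[L] End K L :=
  lsum fun i => LinearMap.toSpanSingleton L (End K L) (σ ^ i).toLinearMap

@[simp]
theorem skewEval_monomial (i : ℕ) (c : L) :
    skewEval σ (monomial i c) = c • (σ ^ i).toLinearMap := by
  simp [skewEval]

theorem skewEval_mul_map (p : L[X]) (r : K[X]) :
    skewEval σ (p * r.map (algebraMap K L)) = skewEval σ p ∘ₗ aeval σ.toLinearMap r := by
  induction p using Polynomial.induction_on' with
  | add p q hp hq => simp only [add_mul, map_add, hp, hq, LinearMap.add_comp]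
  | monomial i c =>
    induction r using Polynomial.induction_on' with
    | add r s hr hs => simp only [Polynomial.map_add, mul_add, map_add, hr, hs, LinearMap.comp_add]
    | monomial j d =>
      ext x
      have hpow : (σ.toLinearMap ^ j) x = (σ ^ j) x := by simp [End.pow_apply]
      simp [-AlgEquiv.coe_pow, aeval_monomial, hpow, monomial_mul_monomial, pow_add,
        Algebra.smul_def, mul_assoc]

theorem skewEval_map (p : K[X]) :
    skewEval σ (p.map (algebraMap K L)) = aeval σ.toLinearMap p := by
  have hone : skewEval σ 1 = LinearMap.id := by
    rw [← monomial_zero_one, skewEval_monomial, one_smul, pow_zero]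
    rfl
  rw [← one_mul (p.map _), skewEval_mul_map, hone, LinearMap.id_comp]

theorem skewEval_monomial_one_pow (c : L) (n : ℕ) :
    skewEval σ (monomial 1 c) ^ n =
      skewEval σ (monomial n (∏ j ∈ Finset.range n, (σ ^ j) c)) := by
  induction n with
  | zero =>
    rw [pow_zero, skewEval_monomial]
    simp
  | succ n ih =>
    ext x
    rw [pow_succ', ih, Finset.prod_range_succ']
    simp [Function.iterate_succ_apply', mul_comm, mul_left_comm]

/-- The coefficients of the `σ`-linearized polynomial `x ↦ f (v * x)`, where `f` has coefficients
`p`. Twisting moves a root `v` of `f` to `1`. -/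
noncomputable def twist (v : L) : L[X] →ₗ[L] L[X] :=
  lsum fun i => (σ ^ i) v • monomial i

@[simp]
theorem twist_monomial (v : L) (i : ℕ) (c : L) :
    twist σ v (monomial i c) = monomial i (c * (σ ^ i) v) := by
  simp [twist, smul_monomial, mul_comm]

@[simp]
theorem coeff_twist (v : L) (p : L[X]) (i : ℕ) :
    (twist σ v p).coeff i = p.coeff i * (σ ^ i) v := by
  induction p using Polynomial.induction_on' with
  | add p q hp hq => simp only [map_add, coeff_add, hp, hq, add_mul]
  | monomial j c =>
    rw [twist_monomial, coeff_monomial, coeff_monomial]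
    aesop

theorem support_twist {v : L} (hv : v ≠ 0) (p : L[X]) :
    (twist σ v p).support = p.support := by
  ext i
  simp [-AlgEquiv.coe_pow, hv]

theorem natDegree_twist {v : L} (hv : v ≠ 0) (p : L[X]) :
    (twist σ v p).natDegree = p.natDegree := by
  simp only [natDegree, degree, support_twist σ hv]

theorem skewEval_twist (v : L) (p : L[X]) :
    skewEval σ (twist σ v p) = skewEval σ p ∘ₗ LinearMap.mulLeft K v := by
  induction p using Polynomial.induction_on' with
  | add p q hp hq => simp only [map_add, hp, hq, LinearMap.add_comp]
  | monomial i c => ext x; simp [mul_assoc]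

theorem eval_one_twist (v : L) (p : L[X]) : (twist σ v p).eval 1 = skewEval σ p v := by
  induction p using Polynomial.induction_on' with
  | add p q hp hq => simp only [map_add, eval_add, hp, hq, LinearMap.add_apply]
  | monomial i c => simp

theorem finrank_ker_skewEval_twist {v : L} (hv : v ≠ 0) (p : L[X]) :
    finrank K (LinearMap.ker (skewEval σ (twist σ v p))) =
      finrank K (LinearMap.ker (skewEval σ p)) := by
  let e : L ≃ₗ[K] L := (LinearEquiv.smulOfNeZero L L v hv).restrictScalars K
  have hcomp : skewEval σ (twist σ v p) = skewEval σ p ∘ₗ e := skewEval_twist σ v p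
  rw [hcomp, LinearMap.ker_comp]
  exact (e.ofSubmodule' _).finrank_eq

theorem exists_twist_eq_mul_X_sub_one {v : L} {p : L[X]} (hv : skewEval σ p v = 0) :
    ∃ r : L[X], twist σ v p = r * (X - 1) := by
  have hroot : (twist σ v p).IsRoot 1 := (eval_one_twist σ v p).trans hv
  obtain ⟨r, hr⟩ := dvd_iff_isRoot.2 hroot
  exact ⟨r, by rw [hr, C_1, mul_comm]⟩

theorem finrank_ker_skewEval_C_mul {c : L} (hc : c ≠ 0) (p : L[X]) :
    finrank K (LinearMap.ker (skewEval σ (C c * p))) =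
      finrank K (LinearMap.ker (skewEval σ p)) := by
  have hker : LinearMap.ker (skewEval σ (C c * p)) = LinearMap.ker (skewEval σ p) := by
    ext x
    simp [← smul_eq_C_mul, hc]
  rw [hker]

end SkewEval

section FixedField

variable {K L : Type*} [Field K] [Field L] [Algebra K L] {σ : L ≃ₐ[K] L}

theorem finrank_ker_sub_one_le_one (hσ : ∀ x, σ x = x → x ∈ Set.range (algebraMap K L)) :
    finrank K (LinearMap.ker (σ.toLinearMap - 1 : End K L)) ≤ 1 := by
  refine finrank_le_one ⟨1, by simp⟩ fun ⟨x, hx⟩ => ?_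
  obtain ⟨y, rfl⟩ := hσ x (by simpa [sub_eq_zero] using hx)
  exact ⟨y, Subtype.ext (Algebra.algebraMap_eq_smul_one y).symm⟩

variable [FiniteDimensional K L]

theorem finrank_ker_skewEval_mul_X_sub_one_le
    (hσ : ∀ x, σ x = x → x ∈ Set.range (algebraMap K L)) (r : L[X]) :
    finrank K (LinearMap.ker (skewEval σ (r * (X - 1)))) ≤
      finrank K (LinearMap.ker (skewEval σ r)) + 1 := by
  have hcomp : skewEval σ (r * (X - 1)) = skewEval σ r ∘ₗ (σ.toLinearMap - 1) := by
    have h := skewEval_mul_map σ r (X - 1)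
    rw [map_sub, aeval_X, map_one, Polynomial.map_sub, map_X, Polynomial.map_one] at h
    exact h
  rw [hcomp]
  exact (finrank_ker_comp_le _ _).trans (Nat.add_le_add_left (finrank_ker_sub_one_le_one hσ) _)

-- `r` is the quotient of `twist σ v p` by `X - 1`.
theorem exists_deflation (hσ : ∀ x, σ x = x → x ∈ Set.range (algebraMap K L)) {p : L[X]}
    (hp : p ≠ 0) {v : L} (hv : v ≠ 0) (hpv : skewEval σ p v = 0) :
    ∃ r : L[X], r ≠ 0 ∧ p.natDegree = r.natDegree + 1 ∧
      finrank K (LinearMap.ker (skewEval σ p)) ≤ finrank K (LinearMap.ker (skewEval σ r)) + 1 ∧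
      r.coeff 0 = -(p.coeff 0 * v) ∧
      r.leadingCoeff = p.leadingCoeff * (σ ^ p.natDegree) v := by
  obtain ⟨r, hr⟩ := exists_twist_eq_mul_X_sub_one σ hpv
  have hr0 : r ≠ 0 := by
    rintro rfl
    rw [zero_mul, ← support_eq_empty, support_twist σ hv, support_eq_empty] at hr
    exact hp hr
  have hdeg : p.natDegree = r.natDegree + 1 := by
    rw [← natDegree_twist σ hv, hr, ← C_1, natDegree_mul hr0 (X_sub_C_ne_zero 1), natDegree_X_sub_C]
  refine ⟨r, hr0, hdeg, ?_, ?_, ?_⟩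
  · rw [← finrank_ker_skewEval_twist σ hv, hr]
    exact finrank_ker_skewEval_mul_X_sub_one_le hσ r
  · have hcoeff : (twist σ v p).coeff 0 = -r.coeff 0 := by simp [hr, mul_coeff_zero]
    rw [← neg_eq_iff_eq_neg, ← hcoeff, coeff_twist, pow_zero, AlgEquiv.one_apply]
  · rw [← coeff_natDegree (p := p), ← coeff_twist, ← natDegree_twist σ hv, coeff_natDegree, hr,
      ← C_1, leadingCoeff_mul, leadingCoeff_X_sub_C, mul_one]

theorem finrank_ker_skewEval_le_natDegree
    (hσ : ∀ x, σ x = x → x ∈ Set.range (algebraMap K L)) {p : L[X]} (hp : p ≠ 0) :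
    finrank K (LinearMap.ker (skewEval σ p)) ≤ p.natDegree := by
  induction hd : p.natDegree generalizing p with
  | zero =>
    obtain ⟨c, rfl⟩ := natDegree_eq_zero.1 hd
    have hc : c ≠ 0 := C_ne_zero.1 hp
    have hbot : LinearMap.ker (skewEval σ (C c)) = ⊥ := by
      ext x
      simp [← monomial_zero_left, hc]
    rw [hbot, finrank_bot]
  | succ d ih =>
    by_cases hker : LinearMap.ker (skewEval σ p) = ⊥
    · rw [hker, finrank_bot]
      exact Nat.zero_le _
    obtain ⟨v, hpv, hv⟩ := (Submodule.ne_bot_iff _).1 hker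
    obtain ⟨r, hr, hdeg, hle, -, -⟩ := exists_deflation hσ hp hv hpv
    have := ih hr (by omega)
    omega

theorem norm_coeff_zero_of_finrank_ker_skewEval_eq
    (hσ : ∀ x, σ x = x → x ∈ Set.range (algebraMap K L)) {p : L[X]} (hp : p ≠ 0)
    (hker : finrank K (LinearMap.ker (skewEval σ p)) = p.natDegree) :
    Algebra.norm K (p.coeff 0) = Algebra.norm K ((-1) ^ p.natDegree * p.leadingCoeff) := by
  induction hd : p.natDegree generalizing p with
  | zero => simp [leadingCoeff, hd]
  | succ d ih =>
    have hne : LinearMap.ker (skewEval σ p) ≠ ⊥ := by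
      intro h
      rw [h, finrank_bot] at hker
      omega
    obtain ⟨v, hpv, hv⟩ := (Submodule.ne_bot_iff _).1 hne
    obtain ⟨r, hr, hdeg, hle, hcoeff, hlead⟩ := exists_deflation hσ hp hv hpv
    have hbound := finrank_ker_skewEval_le_natDegree hσ hr
    have hnorm := ih hr (by omega) (by omega)
    have hnorm_pow : Algebra.norm K ((σ ^ p.natDegree) v) = Algebra.norm K v :=
      Algebra.norm_eq_of_algEquiv _ v
    have hnorm_v : Algebra.norm K v ≠ 0 := Algebra.norm_ne_zero_iff.2 hv
    refine mul_right_cancel₀ hnorm_v ?_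
    calc Algebra.norm K (p.coeff 0) * Algebra.norm K v
        = Algebra.norm K (-1 * r.coeff 0) := by rw [← map_mul, hcoeff, neg_one_mul, neg_neg]
      _ = Algebra.norm K ((-1) ^ (d + 1) * p.leadingCoeff * (σ ^ p.natDegree) v) := by
        rw [map_mul, hnorm, ← map_mul, hlead]
        ring_nf
      _ = Algebra.norm K ((-1) ^ (d + 1) * p.leadingCoeff) * Algebra.norm K v := by
        rw [map_mul, hnorm_pow]

theorem eq_zero_of_le_ker_skewEval
    (hσ : ∀ x, σ x = x → x ∈ Set.range (algebraMap K L)) {p : L[X]} {S : Submodule K L}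
    (hS : S ≤ LinearMap.ker (skewEval σ p)) (hp : p.natDegree < finrank K S) : p = 0 := by
  by_contra hne
  have := finrank_ker_skewEval_le_natDegree hσ hne
  have := Submodule.finrank_mono hS
  omega

theorem eq_zero_of_forall_sum_mul_pow_apply_eq_zero
    (hσ : ∀ x, σ x = x → x ∈ Set.range (algebraMap K L)) {n : ℕ} {c : Fin n → L}
    {S : Submodule K L} (hn : n ≤ finrank K S)
    (hc : ∀ x ∈ S, ∑ i, c i * (σ ^ (i : ℕ)) x = 0) : c = 0 := by
  let p : L[X] := ∑ i : Fin n, monomial i (c i)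
  have hcoeff (i : Fin n) : p.coeff i = c i := by
    simp [p, coeff_monomial, Fin.val_inj]
  have hdeg : p.degree < n := (degree_lt_iff_coeff_zero _ _).2 fun m hm => by
    simp [p, coeff_monomial, fun i : Fin n => (i.2.trans_le hm).ne]
  have hS : S ≤ LinearMap.ker (skewEval σ p) := fun x hx => by
    simpa [p] using hc x hx
  have hp : p = 0 := by
    by_contra hne
    exact hne <| eq_zero_of_le_ker_skewEval hσ hS
      (((natDegree_lt_iff_degree_lt hne).2 hdeg).trans_le hn)
  ext i
  rw [← hcoeff, hp, coeff_zero, Pi.zero_apply]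

theorem skewEval_ne_zero (hσ : ∀ x, σ x = x → x ∈ Set.range (algebraMap K L)) {p : L[X]}
    (hp : p ≠ 0) (hdeg : p.degree < finrank K L) : skewEval σ p ≠ 0 := by
  intro h
  refine hp <| eq_zero_of_le_ker_skewEval hσ (S := ⊤) (by simp [h]) ?_
  rwa [finrank_top, natDegree_lt_iff_degree_lt hp]

theorem finrank_ker_aeval_le_natDegree
    (hσ : ∀ x, σ x = x → x ∈ Set.range (algebraMap K L)) {p : K[X]} (hp : p ≠ 0) :
    finrank K (LinearMap.ker (aeval σ.toLinearMap p)) ≤ p.natDegree := by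
  have hmap : p.map (algebraMap K L) ≠ 0 :=
    (Polynomial.map_ne_zero_iff (algebraMap K L).injective).2 hp
  rw [← skewEval_map, ← natDegree_map (algebraMap K L)]
  exact finrank_ker_skewEval_le_natDegree hσ hmap

theorem finrank_ker_aeval_of_dvd_X_pow_sub_one
    (hσ : ∀ x, σ x = x → x ∈ Set.range (algebraMap K L)) (hpow : σ ^ finrank K L = 1) {p : K[X]}
    (hp : p ∣ X ^ finrank K L - 1) :
    finrank K (LinearMap.ker (aeval σ.toLinearMap p)) = p.natDegree := by
  obtain ⟨g, hg⟩ := hp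
  have hprod : p * g ≠ 0 := hg ▸ X_pow_sub_C_ne_zero Module.finrank_pos 1
  have hrange :
      LinearMap.range (aeval σ.toLinearMap p) ≤ LinearMap.ker (aeval σ.toLinearMap g) := by
    have hzero : aeval σ.toLinearMap (X ^ finrank K L - 1 : K[X]) = 0 := by
      rw [map_sub, aeval_X_pow, map_one, sub_eq_zero]
      ext x
      simpa [End.pow_apply] using DFunLike.congr_fun hpow x
    rw [LinearMap.range_le_ker_iff, ← End.mul_eq_comp, ← map_mul, mul_comm, ← hg, hzero]
  have hdeg : p.natDegree + g.natDegree = finrank K L := by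
    rw [← natDegree_mul (left_ne_zero_of_mul hprod) (right_ne_zero_of_mul hprod), ← hg]
    exact natDegree_X_pow_sub_C
  have hp_le := finrank_ker_aeval_le_natDegree hσ (left_ne_zero_of_mul hprod)
  have hg_le := finrank_ker_aeval_le_natDegree hσ (right_ne_zero_of_mul hprod)
  have hrange_le := Submodule.finrank_mono hrange
  have hrank := (aeval σ.toLinearMap p).finrank_range_add_finrank_ker
  omega

end FixedField

section Generator

variable {K L : Type*} [Field K] [Field L] [Algebra K L] [FiniteDimensional K L] [IsGalois K L]
  {σ : L ≃ₐ[K] L}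

theorem mem_range_algebraMap_of_generator_fixed (hσ : ∀ τ, τ ∈ Subgroup.zpowers σ) (x : L)
    (hx : σ x = x) : x ∈ Set.range (algebraMap K L) := by
  rw [IsGalois.mem_range_algebraMap_iff_fixed]
  intro τ
  have hle : Subgroup.zpowers σ ≤ MulAction.stabilizer (L ≃ₐ[K] L) x :=
    Subgroup.zpowers_le.2 hx
  exact hle (hσ τ)

theorem orderOf_generator (hσ : ∀ τ, τ ∈ Subgroup.zpowers σ) : orderOf σ = finrank K L := by
  rw [orderOf_eq_card_of_forall_mem_zpowers hσ, IsGalois.card_aut_eq_finrank]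

theorem generator_pow_finrank (hσ : ∀ τ, τ ∈ Subgroup.zpowers σ) : σ ^ finrank K L = 1 := by
  rw [← orderOf_generator hσ, pow_orderOf_eq_one]

theorem algebraMap_norm_eq_prod_generator_pow (hσ : ∀ τ, τ ∈ Subgroup.zpowers σ) (x : L) :
    algebraMap K L (Algebra.norm K x) = ∏ i ∈ Finset.range (finrank K L), (σ ^ i) x := by
  classical
  rw [Algebra.norm_eq_prod_automorphisms, ← IsCyclic.image_range_orderOf hσ, orderOf_generator hσ,
    Finset.prod_image]
  rw [← orderOf_generator hσ, Finset.coe_range]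
  exact pow_injOn_Iio_orderOf

theorem pow_finrank_skewEval_monomial_one (hσ : ∀ τ, τ ∈ Subgroup.zpowers σ) {c : L}
    (hc : Algebra.norm K c = 1) : skewEval σ (monomial 1 c) ^ finrank K L = 1 := by
  rw [skewEval_monomial_one_pow, ← algebraMap_norm_eq_prod_generator_pow hσ, hc, map_one,
    skewEval_monomial, generator_pow_finrank hσ, one_smul]
  rfl

-- Hilbert 90: `groupCohomology.exists_div_of_norm_eq_one` has `K` and `L` in `Type`, hence this
-- universe-polymorphic proof, in which `v` is fixed by `T = c⁻¹ σ` as a value of `∑ i, T ^ i`.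
theorem exists_generator_apply_eq_mul (hσ : ∀ τ, τ ∈ Subgroup.zpowers σ) {c : L}
    (hc : Algebra.norm K c = 1) : ∃ v : L, v ≠ 0 ∧ σ v = c * v := by
  have hc0 : c ≠ 0 := by
    rintro rfl
    simp at hc
  let T : End K L := skewEval σ (monomial 1 c⁻¹)
  have hT : T ^ finrank K L = 1 :=
    pow_finrank_skewEval_monomial_one hσ (by rw [Algebra.norm_inv, hc, inv_one])
  let p : L[X] := ∑ i ∈ Finset.range (finrank K L),
    monomial i (∏ j ∈ Finset.range i, (σ ^ j) c⁻¹)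
  have hp_eval : skewEval σ p = ∑ i ∈ Finset.range (finrank K L), T ^ i := by
    simp only [p, T, map_sum, skewEval_monomial_one_pow]
  have hp_coeff : p.coeff 0 = 1 := by
    simp [p, coeff_monomial, Module.finrank_pos]
  have hp_deg : p.degree < finrank K L :=
    (degree_lt_iff_coeff_zero _ _).2 fun m hm => by
      simp [p, coeff_monomial, hm]
  have hp_ne : skewEval σ p ≠ 0 :=
    skewEval_ne_zero (mem_range_algebraMap_of_generator_fixed hσ)
      (fun h => by simp [h] at hp_coeff) hp_deg
  obtain ⟨z, hz⟩ := DFunLike.ne_iff.1 hp_ne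
  have hfixed : T (skewEval σ p z) = skewEval σ p z := by
    have h := DFunLike.congr_fun (mul_geom_sum T (finrank K L)) z
    rw [hT, ← hp_eval, sub_self] at h
    exact sub_eq_zero.1 h
  refine ⟨skewEval σ p z, hz, ?_⟩
  rw [← inv_mul_eq_iff_eq_mul₀ hc0]
  simpa [T] using hfixed

end Generator

section Trinomial

variable {K L : Type*} [Field K] [Field L] [Algebra K L]

/-- The coefficients of the `σ`-linearized trinomial `a x + b σ(x) - σ⁴(x)`. -/
noncomputable def quarticTrinomial (a b : L) : L[X] :=
  monomial 0 a + monomial 1 b - monomial 4 1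

theorem skewEval_quarticTrinomial (σ : L ≃ₐ[K] L) (a b : L) :
    skewEval σ (quarticTrinomial a b) =
      LinearMap.mulLeft K a + LinearMap.mulLeft K b ∘ₗ σ.toLinearMap - (σ ^ 4).toLinearMap := by
  ext x
  simp [quarticTrinomial, -monomial_zero_left]

theorem natDegree_quarticTrinomial (a b : L) : (quarticTrinomial a b).natDegree = 4 := by
  unfold quarticTrinomial
  compute_degree!

theorem leadingCoeff_quarticTrinomial (a b : L) : (quarticTrinomial a b).leadingCoeff = -1 := by
  rw [leadingCoeff, natDegree_quarticTrinomial]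
  simp [quarticTrinomial, coeff_monomial]

theorem coeff_zero_quarticTrinomial (a b : L) : (quarticTrinomial a b).coeff 0 = a := by
  simp [quarticTrinomial, coeff_monomial]

theorem quarticTrinomial_ne_zero (a b : L) : quarticTrinomial a b ≠ 0 :=
  ne_zero_of_natDegree_gt (n := 3) (by rw [natDegree_quarticTrinomial]; norm_num)

variable {σ : L ≃ₐ[K] L}

theorem twist_quarticTrinomial {a v : L} (b : L) (hv : v ≠ 0) (hva : (σ ^ 4) v = -a * v) :
    twist σ v (quarticTrinomial a b) =
      C ((σ ^ 4) v) * quarticTrinomial (-1) (b * (σ v / (σ ^ 4) v)) := by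
  have hv4 : (σ ^ 4) v ≠ 0 := EmbeddingLike.map_ne_zero_iff.2 hv
  simp only [quarticTrinomial, map_add, map_sub, twist_monomial, mul_add, mul_sub, C_mul_monomial,
    pow_zero, pow_one, AlgEquiv.one_apply, one_mul, mul_one]
  congr 3
  · rw [hva]; ring
  · field_simp

theorem apply_div_pow_four_apply (hσ15 : σ ^ 15 = 1) {c v : L} (hv : v ≠ 0)
    (hvc : (σ ^ 4) v = c * v) :
    σ v / (σ ^ 4) v = (σ ^ 4) c * (σ ^ 8) c * (σ ^ 12) c := by
  have hv4 : (σ ^ 4) v ≠ 0 := EmbeddingLike.map_ne_zero_iff.2 hv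
  have hstep (i : ℕ) : (σ ^ (i + 4)) v = (σ ^ i) c * (σ ^ i) v := by
    rw [pow_add, AlgEquiv.mul_apply, hvc, map_mul]
  have h16 : (σ ^ 16) v = σ v := by rw [pow_succ, hσ15, one_mul]
  rw [div_eq_iff hv4, ← h16, hstep 12, hstep 8, hstep 4]
  ring

theorem recurrence_fifteen {R : Type*} [CommRing R] {B y : ℕ → R}
    (hy : ∀ i, y (i + 4) = B i * y (i + 1) - y i) :
    y 15 =
      -(B 3 + B 7 + B 11) * y 0 +
      ((B 7 * B 4 + B 11 * B 4 + B 11 * B 8) + (B 3 + B 7 + B 11) * B 0) * y 1 -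
      (B 11 * B 8 * B 5 + (B 7 * B 4 + B 11 * B 4 + B 11 * B 8) * B 1) * y 2 +
      (B 11 * B 8 * B 5 * B 2 - 1) * y 3 := by
  simp only [hy 11, hy 8, hy 7, hy 5, hy 4, hy 3, hy 2, hy 1, hy 0]
  ring

theorem pow_add_four_apply_of_mem_ker {b x : L}
    (hx : x ∈ LinearMap.ker (skewEval σ (quarticTrinomial (-1) b))) (i : ℕ) :
    (σ ^ (i + 4)) x = (σ ^ i) b * (σ ^ (i + 1)) x - (σ ^ i) x := by
  have h := congrArg (σ ^ i) (LinearMap.mem_ker.1 hx)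
  rw [skewEval_quarticTrinomial] at h
  simp only [LinearMap.sub_apply, LinearMap.add_apply, LinearMap.mulLeft_apply,
    LinearMap.comp_apply, AlgEquiv.toLinearMap_apply, map_sub, map_add, map_mul, map_neg,
    map_one, map_zero] at h
  rw [pow_add, pow_succ σ i, AlgEquiv.mul_apply, AlgEquiv.mul_apply]
  linear_combination -h

theorem pow_add_three_apply_of_mul_eq_neg_one {b : L} (hb : b * σ b * (σ ^ 2) b = -1) (i : ℕ) :
    (σ ^ (i + 3)) b = (σ ^ i) b := by
  have hσb : σ b * (σ ^ 2) b * (σ ^ 3) b = -1 := by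
    simpa [-AlgEquiv.coe_pow, pow_succ', mul_assoc] using congrArg σ hb
  have hne : σ b * (σ ^ 2) b ≠ 0 := left_ne_zero_of_mul (hσb ▸ neg_ne_zero.2 one_ne_zero)
  have hcube : (σ ^ 3) b = b := mul_left_cancel₀ hne (by linear_combination hσb - hb)
  rw [pow_add, AlgEquiv.mul_apply, hcube]

theorem eq_neg_one_or_sq_eq_neg_one {R : Type*} [CommRing R] [IsDomain R] {x y z : R}
    (hsum : x + y + z = -1) (hquad : x = y * y + z * y + z * z) (hprod : x * y * z = -1) :
    x = -1 ∨ x ^ 2 = -1 := by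
  have hfactor : (x + 1) * (x ^ 2 + 1) = 0 := by
    linear_combination hprod - x * hquad - x * (y + z - 1 - x) * hsum
  rwa [mul_eq_zero, ← eq_neg_iff_add_eq_zero, ← eq_neg_iff_add_eq_zero] at hfactor

theorem X_pow_four_add_X_add_one_dvd_X_pow_fifteen_sub_one (R : Type*) [CommRing R] [CharP R 2] :
    (X ^ 4 + X + 1 : R[X]) ∣ X ^ 15 - 1 := by
  refine ⟨X ^ 11 + X ^ 8 + X ^ 7 + X ^ 5 + X ^ 3 + X ^ 2 + X + 1, ?_⟩
  linear_combination -(X ^ 12 + X ^ 11 + X ^ 9 + X ^ 8 + X ^ 7 + X ^ 6 + X ^ 5 + X ^ 4 + X ^ 3 +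
    X ^ 2 + X + 1) * (CharTwo.two_eq_zero : (2 : R[X]) = 0)

theorem quarticTrinomial_neg_one_one_of_charTwo [CharP L 2] :
    quarticTrinomial (-1 : L) 1 = (X ^ 4 + X + 1 : K[X]).map (algebraMap K L) := by
  have h1 : (C (-1) : L[X]) = 1 := by rw [CharTwo.neg_eq, C_1]
  simp only [quarticTrinomial, monomial_zero_left, monomial_one_right_eq_X_pow, h1,
    CharTwo.sub_eq_add, Polynomial.map_add, Polynomial.map_pow, map_X, Polynomial.map_one]
  ring

variable [FiniteDimensional K L]

theorem norm_neg_eq_one_of_finrank_ker_quarticTrinomial_eq_four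
    (hσ : ∀ x, σ x = x → x ∈ Set.range (algebraMap K L)) {a b : L}
    (hker : finrank K (LinearMap.ker (skewEval σ (quarticTrinomial a b))) = 4) :
    Algebra.norm K (-a) = 1 := by
  have hnorm := norm_coeff_zero_of_finrank_ker_skewEval_eq hσ (quarticTrinomial_ne_zero a b)
    (hker.trans (natDegree_quarticTrinomial a b).symm)
  rw [coeff_zero_quarticTrinomial, natDegree_quarticTrinomial, leadingCoeff_quarticTrinomial,
    Even.neg_one_pow (by decide), one_mul] at hnorm
  rw [neg_eq_neg_one_mul, map_mul, hnorm, ← map_mul, neg_one_mul, neg_neg, map_one]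

theorem coeff_relations_of_finrank_ker_eq_four
    (hσ : ∀ x, σ x = x → x ∈ Set.range (algebraMap K L)) (hσ15 : σ ^ 15 = 1) {b : L}
    (hker : finrank K (LinearMap.ker (skewEval σ (quarticTrinomial (-1) b))) = 4) :
    (σ ^ 3) b + (σ ^ 7) b + (σ ^ 11) b = -1 ∧
      b = (σ ^ 7) b * (σ ^ 4) b + (σ ^ 11) b * (σ ^ 4) b + (σ ^ 11) b * (σ ^ 8) b ∧
      b * σ b * (σ ^ 2) b = -1 := by
  let B (i : ℕ) : L := (σ ^ i) b
  let s := B 3 + B 7 + B 11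
  let t := B 7 * B 4 + B 11 * B 4 + B 11 * B 8
  let u := B 11 * B 8 * B 5
  have hvanish : ![-s - 1, t + s * B 0, -(u + t * B 1), u * B 2 - 1] = (0 : Fin 4 → L) := by
    refine eq_zero_of_forall_sum_mul_pow_apply_eq_zero hσ hker.ge fun x hx => ?_
    have h_wrap := recurrence_fifteen (B := B) (y := fun i => (σ ^ i) x)
      (pow_add_four_apply_of_mem_ker hx)
    rw [hσ15, ← pow_zero σ] at h_wrap
    rw [Fin.sum_univ_four]
    change (-s - 1) * (σ ^ 0) x + (t + s * B 0) * (σ ^ 1) x + -(u + t * B 1) * (σ ^ 2) x +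
      (u * B 2 - 1) * (σ ^ 3) x = 0
    linear_combination -h_wrap
  have h0 : -s - 1 = 0 := congrFun hvanish 0
  have h1 : t + s * B 0 = 0 := congrFun hvanish 1
  have h2 : -(u + t * B 1) = 0 := congrFun hvanish 2
  have h3 : u * B 2 - 1 = 0 := congrFun hvanish 3
  have ht : B 0 = t := by linear_combination -h1 - B 0 * h0
  refine ⟨by linear_combination -h0, ht, ?_⟩
  change B 0 * B 1 * B 2 = -1
  linear_combination B 1 * B 2 * ht - B 2 * h2 - h3

theorem charTwo_and_eq_one_of_finrank_ker_eq_four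
    (hσ : ∀ x, σ x = x → x ∈ Set.range (algebraMap K L)) (hσ15 : σ ^ 15 = 1) {b : L}
    (hker : finrank K (LinearMap.ker (skewEval σ (quarticTrinomial (-1) b))) = 4) :
    CharP L 2 ∧ b = 1 := by
  obtain ⟨hsum, hquad, hprod⟩ := coeff_relations_of_finrank_ker_eq_four hσ hσ15 hker
  have hperiod := pow_add_three_apply_of_mul_eq_neg_one hprod
  have h7 : (σ ^ 7) b = σ b := (hperiod 4).trans (hperiod 1)
  have h11 : (σ ^ 11) b = (σ ^ 2) b := (hperiod 8).trans ((hperiod 5).trans (hperiod 2))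
  rw [hperiod 0, h7, h11, pow_zero, AlgEquiv.one_apply] at hsum
  rw [h7, h11, hperiod 1, hperiod 5, hperiod 2, pow_one] at hquad
  rcases eq_neg_one_or_sq_eq_neg_one hsum hquad hprod with hb | hb
  · have htwo : (2 : L) = 0 := by
      rw [hb, map_neg, map_one, map_neg, map_one] at hsum
      linear_combination -hsum
    have := CharTwo.of_one_ne_zero_of_two_eq_zero one_ne_zero htwo
    exact ⟨this, by rw [hb, CharTwo.neg_eq]⟩
  · have hsq : (b * σ b * (σ ^ 2) b) ^ 2 = -1 := by
      rw [mul_pow, mul_pow, ← map_pow, ← map_pow, hb, map_neg, map_neg, map_one, map_one]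
      ring
    have htwo : (2 : L) = 0 := by
      rw [hprod] at hsq
      linear_combination hsq
    have := CharTwo.of_one_ne_zero_of_two_eq_zero one_ne_zero htwo
    refine ⟨this, ?_⟩
    rwa [CharTwo.neg_eq, ← one_pow 2, CharTwo.sq_inj] at hb

theorem finrank_ker_quarticTrinomial_of_charTwo [CharP K 2]
    (hσ : ∀ x, σ x = x → x ∈ Set.range (algebraMap K L)) (hL : finrank K L = 15)
    (hσ15 : σ ^ 15 = 1) :
    finrank K (LinearMap.ker (skewEval σ (quarticTrinomial (-1) 1))) = 4 := by
  have : CharP L 2 := (Algebra.charP_iff K L 2).1 inferInstance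
  have hdvd := X_pow_four_add_X_add_one_dvd_X_pow_fifteen_sub_one K
  rw [← hL] at hdvd hσ15
  rw [quarticTrinomial_neg_one_one_of_charTwo (K := K), skewEval_map,
    finrank_ker_aeval_of_dvd_X_pow_sub_one hσ hσ15 hdvd]
  compute_degree!

end Trinomial

section DegreeFifteen

variable {K L : Type*} [Field K] [Field L] [Algebra K L] [FiniteDimensional K L] [IsGalois K L]
  {σ : L ≃ₐ[K] L}

theorem finrank_ker_quarticTrinomial_neg_one_eq_four_iff (hL : finrank K L = 15)
    (hσ : ∀ τ, τ ∈ Subgroup.zpowers σ) (b : L) :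
    finrank K (LinearMap.ker (skewEval σ (quarticTrinomial (-1) b))) = 4 ↔ CharP K 2 ∧ b = 1 := by
  have hfixed := mem_range_algebraMap_of_generator_fixed hσ
  have hσ15 : σ ^ 15 = 1 := hL ▸ generator_pow_finrank hσ
  constructor
  · intro h
    rw [Algebra.charP_iff K L 2]
    exact charTwo_and_eq_one_of_finrank_ker_eq_four hfixed hσ15 h
  · rintro ⟨hchar, rfl⟩
    exact finrank_ker_quarticTrinomial_of_charTwo hfixed hL hσ15

theorem exists_generator_pow_four_apply_eq_mul (hL : finrank K L = 15)
    (hσ : ∀ τ, τ ∈ Subgroup.zpowers σ) {c : L} (hc : Algebra.norm K c = 1) :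
    ∃ v : L, v ≠ 0 ∧ (σ ^ 4) v = c * v := by
  have hσ15 : σ ^ 15 = 1 := hL ▸ generator_pow_finrank hσ
  have hmem : σ ∈ Subgroup.zpowers (σ ^ 4) :=
    Subgroup.mem_zpowers_iff.2 ⟨4, by rw [zpow_ofNat, ← pow_mul, pow_succ, hσ15, one_mul]⟩
  exact exists_generator_apply_eq_mul (fun τ => Subgroup.zpowers_le.2 hmem (hσ τ)) hc

theorem finrank_ker_quarticTrinomial_eq_four_iff_of_norm_neg (hL : finrank K L = 15)
    (hσ : ∀ τ, τ ∈ Subgroup.zpowers σ) {a : L} (ha : Algebra.norm K (-a) = 1) (b : L) :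
    finrank K (LinearMap.ker (skewEval σ (quarticTrinomial a b))) = 4 ↔
      CharP K 2 ∧ b = ((σ ^ 4) (-a) * (σ ^ 8) (-a) * (σ ^ 12) (-a))⁻¹ := by
  have hσ15 : σ ^ 15 = 1 := hL ▸ generator_pow_finrank hσ
  obtain ⟨v, hv, hva⟩ := exists_generator_pow_four_apply_eq_mul hL hσ ha
  have hv4 : (σ ^ 4) v ≠ 0 := EmbeddingLike.map_ne_zero_iff.2 hv
  have hv1 : σ v / (σ ^ 4) v ≠ 0 := div_ne_zero (EmbeddingLike.map_ne_zero_iff.2 hv) hv4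
  rw [← finrank_ker_skewEval_twist σ hv, twist_quarticTrinomial b hv hva,
    finrank_ker_skewEval_C_mul σ hv4, finrank_ker_quarticTrinomial_neg_one_eq_four_iff hL hσ,
    ← apply_div_pow_four_apply hσ15 hv hva, ← mul_eq_one_iff_eq_inv₀ hv1]

theorem stmt_14_general (hL : finrank K L = 15) (hσ : ∀ τ, τ ∈ Subgroup.zpowers σ) (a b : L) :
    finrank K (LinearMap.ker
      (LinearMap.mulLeft K a + LinearMap.mulLeft K b ∘ₗ σ.toLinearMap -
        (σ ^ 4).toLinearMap)) = 4 ↔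
      Algebra.norm K a = 1 ∧ CharP K 2 ∧ b = ((σ ^ 4) a * (σ ^ 8) a * (σ ^ 12) a)⁻¹ := by
  have hfixed := mem_range_algebraMap_of_generator_fixed hσ
  have hneg (hK : CharP K 2) : -a = a := by
    have : CharP L 2 := (Algebra.charP_iff K L 2).1 hK
    exact CharTwo.neg_eq a
  rw [← skewEval_quarticTrinomial]
  constructor
  · intro h
    have hnorm := norm_neg_eq_one_of_finrank_ker_quarticTrinomial_eq_four hfixed h
    obtain ⟨hK, hb⟩ := (finrank_ker_quarticTrinomial_eq_four_iff_of_norm_neg hL hσ hnorm b).1 h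
    rw [hneg hK] at hnorm hb
    exact ⟨hnorm, hK, hb⟩
  · rintro ⟨hnorm, hK, hb⟩
    rw [← hneg hK] at hnorm hb
    exact (finrank_ker_quarticTrinomial_eq_four_iff_of_norm_neg hL hσ hnorm b).2 ⟨hK, hb⟩

end DegreeFifteen

section FiniteField

variable {K L : Type*} [Field K] [Field L] [Algebra K L]

theorem norm_eq_one_iff_pow_eq_one [Finite L] (x : L) :
    Algebra.norm K x = 1 ↔ x ^ ((Nat.card L - 1) / (Nat.card K - 1)) = 1 := by
  rw [← FiniteField.algebraMap_norm_eq_pow, map_eq_one_iff _ (algebraMap K L).injective]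

variable [Fintype K]

theorem charP_two_iff_even_card : CharP K 2 ↔ Even (Fintype.card K) := by
  rw [Nat.even_iff, ← FiniteField.even_card_iff_char_two, ringChar.eq_iff]

theorem mem_zpowers_of_forall_apply_eq_pow_card_pow [Finite L] {s : ℕ}
    (hs : s.Coprime (finrank K L)) {σ : L ≃ₐ[K] L} (hσ : ∀ x, σ x = x ^ Fintype.card K ^ s)
    (τ : L ≃ₐ[K] L) : τ ∈ Subgroup.zpowers σ := by
  have hpow : σ = FiniteField.frobeniusAlgEquivOfAlgebraic K L ^ s := by
    ext x
    rw [hσ, AlgEquiv.coe_pow, FiniteField.coe_frobeniusAlgEquivOfAlgebraic_iterate]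
  have horder : orderOf σ = Nat.card (L ≃ₐ[K] L) := by
    rw [hpow, Nat.Coprime.orderOf_pow, FiniteField.orderOf_frobeniusAlgEquivOfAlgebraic,
      IsGalois.card_aut_eq_finrank]
    rwa [FiniteField.orderOf_frobeniusAlgEquivOfAlgebraic, Nat.coprime_comm]
  have htop : Subgroup.zpowers σ = ⊤ :=
    (Subgroup.card_eq_iff_eq_top _).1 ((Nat.card_zpowers σ).trans horder)
  exact htop ▸ Subgroup.mem_top τ

end FiniteField

/-- (Case `n = 15` of Proposition `prop:d=4`.) Let `σ` be a generator of
`Gal(F_{q^15}/F_q)`, i.e. `σ : x ↦ x^{q^s}` with `gcd(s,15) = 1`. For `a, b ∈ F_{q^15}`,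
the `F_q`-dimension of the kernel of `a·x + b·x^σ − x^{σ⁴}` equals `4` iff
`N_{q^15/q}(a) = 1`, `q` is even, and `b = (σ⁴(a)·σ⁸(a)·σ¹²(a))⁻¹`. -/
theorem stmt_14 (p q : ℕ) (hp : p.Prime) (hq : ∃ m : ℕ, 0 < m ∧ q = p ^ m)
    (K L : Type*) [Field K] [Field L] [Fintype K] [Fintype L] [Algebra K L]
    (hcardK : Fintype.card K = q) (hcardL : Fintype.card L = q ^ 15)
    (s : ℕ) (hs : 0 < s) (hsn : Nat.gcd s 15 = 1)
    (σ : L ≃ₐ[K] L) (hσ : ∀ x : L, σ x = x ^ q ^ s)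
    (a b : L) :
    Module.finrank K
      (LinearMap.ker
        (LinearMap.mulLeft K a + LinearMap.mulLeft K b ∘ₗ σ.toLinearMap
          - (σ ^ 4 : L ≃ₐ[K] L).toLinearMap)) = 4
      ↔ (a ^ ((q ^ 15 - 1) / (q - 1)) = 1
          ∧ Even q
          ∧ b = ((σ ^ 4) a * (σ ^ 8) a * (σ ^ 12) a)⁻¹) := by
  subst hcardK
  have hfinrank : finrank K L = 15 := by
    refine Nat.pow_right_injective (Fintype.one_lt_card (α := K)) ?_
    exact Module.card_eq_pow_finrank.symm.trans hcardL
  have hgen := mem_zpowers_of_forall_apply_eq_pow_card_pow (hfinrank ▸ hsn) hσ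
  rw [stmt_14_general hfinrank hgen, norm_eq_one_iff_pow_eq_one, charP_two_iff_even_card,
    Nat.card_eq_fintype_card, Nat.card_eq_fintype_card, hcardL]
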